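/- For all integers n ≥ 1 and m ≥ 2, the number of fuzzy topologies on an n-element set X with membership values in an m-element chain M having exactly 4 open sets is τ_F(n, m, 4) = (m(m+1)/2)^n − 3·m^n + 2^(n−1) + 2. -/

import Mathlib

/-- A fuzzy topology on `Fin n` with membership values in the `m`-element chain `Fin m`:
a collection of fuzzy sets (functions `Fin n → Fin m`) containing the constant function
with the least value, the constant function with the greatest value, and closed under
pointwise (binary) supremum and infimum. -/
def IsFuzzyTopology {n m : ℕ} (hm : m ≠ 0) (τ : Finset (Fin n → Fin m)) : Prop :=
  (fun _ => (⟨0, Nat.pos_of_ne_zero hm⟩ : Fin m)) ∈ τ ∧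
  (fun _ => (⟨m - 1, by omega⟩ : Fin m)) ∈ τ ∧
  (∀ f ∈ τ, ∀ g ∈ τ, f ⊔ g ∈ τ) ∧
  (∀ f ∈ τ, ∀ g ∈ τ, f ⊓ g ∈ τ)

/-- `tauF n m k hm` is the number of fuzzy topologies on an `n`-element set with values in an
`m`-element chain having exactly `k` open sets. -/
noncomputable def tauF (n m k : ℕ) (hm : m ≠ 0) : ℕ :=
  Nat.card {τ : Finset (Fin n → Fin m) // IsFuzzyTopology hm τ ∧ τ.card = k}

/-- `biTauF n m k hm` is the number of fuzzy bitopological spaces (unordered pairs of fuzzy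
topologies, allowing equal ones) on an `n`-element set with values in an `m`-element chain in
which both topologies have exactly `k` open sets. -/
noncomputable def biTauF (n m k : ℕ) (hm : m ≠ 0) : ℕ :=
  Nat.card (Sym2 {τ : Finset (Fin n → Fin m) // IsFuzzyTopology hm τ ∧ τ.card = k})

/-!
Fuzzy topologies are the sublattices of the function lattice `X → M` that contain `⊥` and `⊤`. In
a finite bounded lattice with `N` elements, a four-element such sublattice is `{⊥, ⊤, f, g}` with
distinct `f, g ∉ {⊥, ⊤}` either comparable or complementary. So twice the number of these
sublattices is the number of ordered pairs `(f, g)` of this kind, of which `2 (L - 3 N + 3)` are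
comparable and `C - 2` are complementary, where `L` and `C` are the numbers of all pairs with
`f ≤ g` and of all complementary pairs. In `X → M` both relations are checked pointwise, hence `L`
and `C` are the `|X|`-th powers of the corresponding numbers `|M| (|M| + 1) / 2` and `2` for the
chain `M`.
-/

open Finset

section BoundedSublattice

variable {α : Type*} [Lattice α] [BoundedOrder α]

/-- A sublattice containing `⊥` and `⊤`: the lattice-theoretic form of a fuzzy topology. -/
structure IsBoundedSublattice (s : Set α) : Prop extends IsSublattice s where
  bot_mem : ⊥ ∈ s
  top_mem : ⊤ ∈ s

theorem supClosed_insert_bot_top_pair_iff {f g : α} :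
    SupClosed ({⊥, ⊤, f, g} : Set α) ↔ f ⊔ g ∈ ({⊥, ⊤, f, g} : Set α) := by
  refine ⟨fun h => h (by simp) (by simp), fun h => ?_⟩
  rintro a (rfl | rfl | rfl | rfl) b (rfl | rfl | rfl | rfl) <;>
    first | exact h | (rw [sup_comm]; exact h) | simp

theorem infClosed_insert_bot_top_pair_iff {f g : α} :
    InfClosed ({⊥, ⊤, f, g} : Set α) ↔ f ⊓ g ∈ ({⊥, ⊤, f, g} : Set α) := by
  refine ⟨fun h => h (by simp) (by simp), fun h => ?_⟩
  rintro a (rfl | rfl | rfl | rfl) b (rfl | rfl | rfl | rfl) <;>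
    first | exact h | (rw [inf_comm]; exact h) | simp

theorem isBoundedSublattice_insert_bot_top_pair_iff {f g : α} :
    IsBoundedSublattice ({⊥, ⊤, f, g} : Set α) ↔ f ≤ g ∨ g ≤ f ∨ IsCompl f g := by
  have closed_iff : IsBoundedSublattice ({⊥, ⊤, f, g} : Set α) ↔
      f ⊔ g ∈ ({⊥, ⊤, f, g} : Set α) ∧ f ⊓ g ∈ ({⊥, ⊤, f, g} : Set α) := by
    rw [← supClosed_insert_bot_top_pair_iff, ← infClosed_insert_bot_top_pair_iff]
    exact ⟨fun h => ⟨h.supClosed, h.infClosed⟩, fun h => ⟨⟨h.1, h.2⟩, by simp, by simp⟩⟩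
  simp only [closed_iff, Set.mem_insert_iff, Set.mem_singleton_iff, sup_eq_bot_iff, sup_eq_left,
    sup_eq_right, inf_eq_top_iff, inf_eq_left, inf_eq_right, isCompl_iff, disjoint_iff,
    codisjoint_iff]
  constructor
  · rintro ⟨⟨rfl, rfl⟩ | hsup | hgf | hfg, hinf⟩
    · exact Or.inl le_rfl
    · rcases hinf with hinf | ⟨rfl, rfl⟩ | hfg | hgf
      · exact Or.inr (Or.inr ⟨hinf, hsup⟩)
      · exact Or.inl le_rfl
      · exact Or.inl hfg
      · exact Or.inr (Or.inl hgf)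
    · exact Or.inr (Or.inl hgf)
    · exact Or.inl hfg
  · rintro (hfg | hgf | ⟨hinf, hsup⟩)
    · simp [hfg]
    · simp [hgf]
    · simp [hinf, hsup]

end BoundedSublattice

section ProperPairs

variable {α : Type*} [Fintype α] [DecidableEq α] [PartialOrder α] [BoundedOrder α]

variable (α) in
/-- The ordered pairs of distinct elements other than `⊥` and `⊤`. -/
def properPairs : Finset (α × α) :=
  ({⊥, ⊤}ᶜ : Finset α).offDiag

theorem mem_properPairs {p : α × α} :
    p ∈ properPairs α ↔ (p.1 ≠ ⊥ ∧ p.1 ≠ ⊤) ∧ (p.2 ≠ ⊥ ∧ p.2 ≠ ⊤) ∧ p.1 ≠ p.2 := by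
  simp [properPairs]

variable [Nontrivial α]

theorem card_insert_bot_top_pair {f g : α} (h : (f, g) ∈ properPairs α) :
    #{⊥, ⊤, f, g} = 4 := by
  obtain ⟨⟨hf_bot, hf_top⟩, ⟨hg_bot, hg_top⟩, hfg⟩ := mem_properPairs.1 h
  have hbot : (⊥ : α) ∉ ({⊤, f, g} : Finset α) := by simp [hf_bot.symm, hg_bot.symm]
  have htop : (⊤ : α) ∉ ({f, g} : Finset α) := by simp [hf_top.symm, hg_top.symm]
  rw [card_insert_of_notMem hbot, card_insert_of_notMem htop, card_pair hfg]

theorem mem_properPairs_and_insert_bot_top_pair_eq_iff {s : Finset α} (hbot : ⊥ ∈ s)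
    (htop : ⊤ ∈ s) (hs : #s = 4) {f g : α} :
    (f, g) ∈ properPairs α ∧ {⊥, ⊤, f, g} = s ↔ (f, g) ∈ (s \ {⊥, ⊤}).offDiag := by
  have hoff : (f, g) ∈ (s \ {⊥, ⊤}).offDiag ↔ (f, g) ∈ properPairs α ∧ f ∈ s ∧ g ∈ s := by
    simp only [mem_properPairs, mem_offDiag, mem_sdiff, mem_insert, mem_singleton, not_or]
    tauto
  rw [hoff]
  refine and_congr_right fun hp => ⟨?_, fun ⟨hf, hg⟩ => ?_⟩
  · rintro rfl
    simp
  · refine eq_of_subset_of_card_le ?_ (by rw [hs, card_insert_bot_top_pair hp])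
    simp [insert_subset_iff, hbot, htop, hf, hg]

theorem card_properPairs_le_add_three_mul_card [DecidableLE α] :
    #{p ∈ properPairs α | p.1 ≤ p.2} + 3 * Fintype.card α = #{p : α × α | p.1 ≤ p.2} + 3 := by
  -- The pairs with `p.1 ≤ p.2` form a triangle with sides `p.1 = ⊥`, `p.2 = ⊤` and `p.1 = p.2`;
  -- each corner is attributed to one of the two sides meeting there.
  have triangle : ({p : α × α | p.1 ≤ p.2} : Finset (α × α)) =
      {⊥} ×ˢ univ ∪ ({⊥}ᶜ ×ˢ {⊤} ∪ (({⊥, ⊤}ᶜ : Finset α).diag ∪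
        {p ∈ properPairs α | p.1 ≤ p.2})) := by
    ext ⟨f, g⟩
    simp only [mem_filter, mem_univ, true_and, mem_union, mem_product, mem_singleton, mem_compl,
      mem_insert, mem_diag, mem_properPairs]
    grind [bot_le, le_top, le_refl, top_le_iff, le_bot_iff]
  have hbot : #({⊥}ᶜ : Finset α) + 1 = Fintype.card α := by
    rw [← card_singleton (⊥ : α), card_compl_add_card]
  have hproper : #({⊥, ⊤}ᶜ : Finset α) + 2 = Fintype.card α := by
    rw [← card_pair (bot_ne_top (α := α)), card_compl_add_card]
  rw [triangle, card_union_of_disjoint, card_union_of_disjoint, card_union_of_disjoint,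
    card_product, card_product, diag_card, card_singleton, card_singleton, card_univ]
  · omega
  all_goals
    simp only [disjoint_left, mem_union, mem_product, mem_singleton, mem_compl, mem_insert,
      mem_diag, mem_filter, mem_properPairs]
    grind

end ProperPairs

section Lattice

variable {α : Type*} [Fintype α] [DecidableEq α] [Lattice α] [BoundedOrder α]
  [DecidableRel (IsCompl : α → α → Prop)]

theorem card_properPairs_comparable_or_isCompl [DecidableLE α] :
    #{p ∈ properPairs α | p.1 ≤ p.2 ∨ p.2 ≤ p.1 ∨ IsCompl p.1 p.2} =
      2 * #{p ∈ properPairs α | p.1 ≤ p.2} + #{p ∈ properPairs α | IsCompl p.1 p.2} := by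
  have card_ge : #{p ∈ properPairs α | p.2 ≤ p.1} = #{p ∈ properPairs α | p.1 ≤ p.2} := by
    refine card_equiv (Equiv.prodComm α α) fun p => ?_
    simp only [mem_filter, mem_properPairs, Equiv.prodComm_apply, Prod.fst_swap, Prod.snd_swap]
    tauto
  rw [filter_or, filter_or, card_union_of_disjoint, card_union_of_disjoint, card_ge]
  · ring
  · refine disjoint_filter.2 fun p hp hge hcompl => ?_
    exact (mem_properPairs.1 hp).2.1.1 (hcompl.disjoint.eq_bot_of_ge hge)
  · rw [← filter_or]
    refine disjoint_filter.2 fun p hp hle => ?_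
    obtain ⟨⟨hbot, -⟩, -, hne⟩ := mem_properPairs.1 hp
    rintro (hge | hcompl)
    · exact hne (le_antisymm hle hge)
    · exact hbot (hcompl.disjoint.eq_bot_of_le hle)

variable [Nontrivial α]

theorem card_properPairs_isCompl_add_two :
    #{p ∈ properPairs α | IsCompl p.1 p.2} + 2 = #{p : α × α | IsCompl p.1 p.2} := by
  have trivial_subset : {(⊥, ⊤), (⊤, ⊥)} ⊆ ({p : α × α | IsCompl p.1 p.2} : Finset (α × α)) := by
    simpa [insert_subset_iff] using And.intro isCompl_bot_top isCompl_top_bot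
  have proper_eq : ({p ∈ properPairs α | IsCompl p.1 p.2} : Finset (α × α)) =
      ({p : α × α | IsCompl p.1 p.2} : Finset (α × α)) \ {(⊥, ⊤), (⊤, ⊥)} := by
    ext ⟨f, g⟩
    simp only [mem_filter, mem_univ, true_and, mem_sdiff, mem_insert, mem_singleton,
      Prod.mk.injEq, mem_properPairs]
    refine ⟨by tauto, fun ⟨h, hne⟩ => ?_⟩
    have hf : f ≠ ⊥ := by
      rintro rfl
      exact hne (Or.inl ⟨rfl, eq_top_of_bot_isCompl h⟩)
    refine ⟨⟨⟨hf, ?_⟩, ⟨?_, ?_⟩, h.disjoint.ne hf⟩, h⟩ <;> rintro rfl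
    · exact hne (Or.inr ⟨rfl, eq_bot_of_top_isCompl h⟩)
    · exact hne (Or.inr ⟨eq_top_of_isCompl_bot h, rfl⟩)
    · exact hne (Or.inl ⟨eq_bot_of_isCompl_top h, rfl⟩)
  have card_trivial : #{((⊥ : α), (⊤ : α)), (⊤, ⊥)} = 2 := card_pair (by simp)
  rw [proper_eq, ← card_trivial, card_sdiff_add_card_eq_card trivial_subset]

theorem two_mul_natCard_isBoundedSublattice_card_eq_four [DecidableLE α] :
    2 * Nat.card {s : Finset α // IsBoundedSublattice (s : Set α) ∧ #s = 4} =
      #{p ∈ properPairs α | p.1 ≤ p.2 ∨ p.2 ≤ p.1 ∨ IsCompl p.1 p.2} := by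
  classical
  have maps_to : ∀ p ∈ ({p ∈ properPairs α | p.1 ≤ p.2 ∨ p.2 ≤ p.1 ∨ IsCompl p.1 p.2} :
      Finset (α × α)), ({⊥, ⊤, p.1, p.2} : Finset α) ∈
        ({s : Finset α | IsBoundedSublattice (s : Set α) ∧ #s = 4} : Finset (Finset α)) := by
    intro p hp
    obtain ⟨hp, hgen⟩ := mem_filter.1 hp
    refine mem_filter.2 ⟨mem_univ _, ?_, card_insert_bot_top_pair hp⟩
    simpa using isBoundedSublattice_insert_bot_top_pair_iff.2 hgen
  rw [Nat.card_eq_fintype_card, Fintype.card_subtype, card_eq_sum_card_fiberwise maps_to,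
    sum_const_nat (m := 2), mul_comm]
  intro s hs
  obtain ⟨-, hs, hs_card⟩ := mem_filter.1 hs
  have fiber_eq : ({p ∈ ({p ∈ properPairs α | p.1 ≤ p.2 ∨ p.2 ≤ p.1 ∨ IsCompl p.1 p.2} :
      Finset (α × α)) | {⊥, ⊤, p.1, p.2} = s} : Finset (α × α)) = (s \ {⊥, ⊤}).offDiag := by
    ext ⟨f, g⟩
    rw [← mem_properPairs_and_insert_bot_top_pair_eq_iff hs.bot_mem hs.top_mem hs_card,
      mem_filter, mem_filter, and_right_comm, and_iff_left_iff_imp]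
    rintro ⟨-, rfl⟩
    exact isBoundedSublattice_insert_bot_top_pair_iff.1 (by simpa using hs)
  have card_proper : #(s \ {⊥, ⊤}) = 2 := by
    have hsub : ({⊥, ⊤} : Finset α) ⊆ s := by
      simpa [insert_subset_iff] using And.intro hs.bot_mem hs.top_mem
    rw [card_sdiff_of_subset hsub, hs_card, card_pair bot_ne_top]
  rw [fiber_eq, offDiag_card, card_proper]

end Lattice

theorem two_mul_natCard_isBoundedSublattice_card_eq_four_add {α : Type*} [Finite α] [Lattice α]
    [BoundedOrder α] [Nontrivial α] :
    2 * Nat.card {s : Finset α // IsBoundedSublattice (s : Set α) ∧ #s = 4} + 6 * Nat.card α =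
      2 * Nat.card {p : α × α // p.1 ≤ p.2} + Nat.card {p : α × α // IsCompl p.1 p.2} + 4 := by
  classical
  have := Fintype.ofFinite α
  have hle := card_properPairs_le_add_three_mul_card (α := α)
  have hcompl := card_properPairs_isCompl_add_two (α := α)
  have hdouble := two_mul_natCard_isBoundedSublattice_card_eq_four (α := α)
  rw [card_properPairs_comparable_or_isCompl] at hdouble
  simp only [Nat.card_eq_fintype_card, Fintype.card_subtype] at hdouble ⊢
  omega

theorem natCard_subtype_forall_rel {ι β γ : Type*} [Finite ι] (r : β → γ → Prop) :
    Nat.card {p : (ι → β) × (ι → γ) // ∀ i, r (p.1 i) (p.2 i)} =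
      Nat.card {q : β × γ // r q.1 q.2} ^ Nat.card ι := by
  rw [← Nat.card_fun]
  exact Nat.card_congr <|
    ((Equiv.arrowProdEquivProdArrow ι _ _).symm.subtypeEquiv fun _ => Iff.rfl).trans
      (Equiv.subtypePiEquivPi (p := fun _ q => r q.1 q.2))

section Chain

variable {β : Type*} [LinearOrder β]

theorem natCard_subtype_fst_le_snd [Finite β] :
    Nat.card {q : β × β // q.1 ≤ q.2} = Nat.card β * (Nat.card β + 1) / 2 := by
  rw [← Nat.card_congr Sym2.sortEquiv, Sym2.natCard, Nat.choose_two_right, Nat.add_sub_cancel,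
    mul_comm]

variable [BoundedOrder β]

theorem isCompl_iff_eq_bot_top_or_eq_top_bot {a b : β} :
    IsCompl a b ↔ a = ⊥ ∧ b = ⊤ ∨ a = ⊤ ∧ b = ⊥ := by
  constructor
  · intro h
    rcases le_total a b with hab | hba
    · obtain rfl := h.disjoint.eq_bot_of_le hab
      exact Or.inl ⟨rfl, eq_top_of_bot_isCompl h⟩
    · obtain rfl := h.disjoint.eq_bot_of_ge hba
      exact Or.inr ⟨eq_top_of_isCompl_bot h, rfl⟩
  · rintro (⟨rfl, rfl⟩ | ⟨rfl, rfl⟩)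
    · exact isCompl_bot_top
    · exact isCompl_top_bot

theorem natCard_subtype_isCompl [Nontrivial β] : Nat.card {q : β × β // IsCompl q.1 q.2} = 2 := by
  rw [← card_pair (a := ((⊥ : β), (⊤ : β))) (b := (⊤, ⊥)) (by simp)]
  exact Nat.subtype_card _ (by simp [isCompl_iff_eq_bot_top_or_eq_top_bot])

end Chain

theorem tauF_four_open_sets_general {X M : Type*} [Finite X] [Nonempty X] [Finite M]
    [LinearOrder M] [BoundedOrder M] [Nontrivial M] :
    (Nat.card {τ : Finset (X → M) // IsBoundedSublattice (τ : Set (X → M)) ∧ #τ = 4} : ℤ) =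
      ((Nat.card M * (Nat.card M + 1) / 2 : ℕ) : ℤ) ^ Nat.card X -
        3 * (Nat.card M : ℤ) ^ Nat.card X + 2 ^ (Nat.card X - 1) + 2 := by
  have count := two_mul_natCard_isBoundedSublattice_card_eq_four_add (α := X → M)
  have two_pow : 2 ^ Nat.card X = 2 * 2 ^ (Nat.card X - 1) :=
    (mul_pow_sub_one Nat.card_pos.ne' 2).symm
  simp only [Pi.le_def, Pi.isCompl_iff] at count
  rw [natCard_subtype_forall_rel (· ≤ ·), natCard_subtype_forall_rel IsCompl,
    natCard_subtype_fst_le_snd, natCard_subtype_isCompl, Nat.card_fun, two_pow] at count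
  apply_fun ((↑) : ℕ → ℤ) at count
  push_cast at count ⊢
  linarith

theorem isFuzzyTopology_iff_isBoundedSublattice {n m : ℕ} [NeZero m]
    {τ : Finset (Fin n → Fin m)} :
    IsFuzzyTopology (NeZero.ne m) τ ↔ IsBoundedSublattice (τ : Set (Fin n → Fin m)) :=
  ⟨fun ⟨hbot, htop, hsup, hinf⟩ =>
    ⟨⟨fun f hf g hg => hsup f hf g hg, fun f hf g hg => hinf f hf g hg⟩, hbot, htop⟩,
   fun h => ⟨h.bot_mem, h.top_mem, fun _ hf _ hg => h.supClosed hf hg,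
    fun _ hf _ hg => h.infClosed hf hg⟩⟩

theorem tauF_four_open_sets (n m : ℕ) (hn : 1 ≤ n) (hm : 2 ≤ m) :
    (tauF n m 4 (by omega) : ℤ) =
      ((m * (m + 1) / 2 : ℕ) : ℤ) ^ n - 3 * (m : ℤ) ^ n + 2 ^ (n - 1) + 2 := by
  have : NeZero n := ⟨by omega⟩
  have : NeZero m := ⟨by omega⟩
  have : Nontrivial (Fin m) := Fin.nontrivial_iff_two_le.2 hm
  simpa only [tauF, isFuzzyTopology_iff_isBoundedSublattice, Nat.card_fin] using
    tauF_four_open_sets_general (X := Fin n) (M := Fin m)
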